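/- arXiv:2210.16658 — 2 statements merged into one kernel-verified Lean document; each statement's English description precedes it below -/
import Mathlib

section
/- For every H ∈ ℝ^{d×Kn} and λ_W > 0, the matrix H Hᵀ + n λ_W I_d is invertible, the map W ↦ g(W,H) has a unique global minimizer over ℝ^{K×d} given by W*(H) := Y Hᵀ (H Hᵀ + n λ_W I_d)^{-1}, and moreover W*(H) = (1/K) H̄ᵀ (Σ̃_T(H) + (λ_W/K) I_d)^{-1}, where H̄ = [h̄_1, …, h̄_K] ∈ ℝ^{d×K} is the matrix of class means. -/
open Matrix Filter
open scoped BigOperators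

noncomputable section

variable {K n d : ℕ}

/-- The one-hot label matrix `Y = I_K ⊗ 1_nᵀ`: columns are indexed by class/sample pairs. -/
def Ymat (K n : ℕ) : Matrix (Fin K) (Fin K × Fin n) ℝ :=
  Matrix.of fun k p => if p.1 = k then 1 else 0

/-- Squared Frobenius norm. -/
def frobSq {m p : Type*} [Fintype m] [Fintype p] (M : Matrix m p ℝ) : ℝ :=
  ∑ i, ∑ j, (M i j) ^ 2

/-- Frobenius norm. -/
def frobNorm {m p : Type*} [Fintype m] [Fintype p] (M : Matrix m p ℝ) : ℝ :=
  Real.sqrt (frobSq M)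

/-- The unconstrained-features objective `g`. -/
def g (lW lH : ℝ) (W : Matrix (Fin K) (Fin d) ℝ)
    (H : Matrix (Fin d) (Fin K × Fin n) ℝ) : ℝ :=
  (1 / (2 * (K : ℝ) * n)) * frobSq (W * H - Ymat K n) +
    (lW / (2 * (K : ℝ))) * frobSq W + (lH / (2 * (K : ℝ) * n)) * frobSq H

/-- Class means. -/
def classMean (H : Matrix (Fin d) (Fin K × Fin n) ℝ) (k : Fin K) : Fin d → ℝ :=
  fun a => (1 / (n : ℝ)) * ∑ i, H a (k, i)

/-- Global mean. -/
def globalMean (H : Matrix (Fin d) (Fin K × Fin n) ℝ) : Fin d → ℝ :=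
  fun a => (1 / ((K : ℝ) * n)) * ∑ p, H a p

/-- Matrix of class means `H̄ ∈ ℝ^{d×K}`. -/
def Hbar (H : Matrix (Fin d) (Fin K × Fin n) ℝ) : Matrix (Fin d) (Fin K) ℝ :=
  Matrix.of fun a k => classMean H k a

/-- `H̄ ⊗ 1_nᵀ`: the matrix whose n columns of class k all equal the class mean. -/
def HbarSpread (H : Matrix (Fin d) (Fin K × Fin n) ℝ) :
    Matrix (Fin d) (Fin K × Fin n) ℝ :=
  Matrix.of fun a p => classMean H p.1 a

/-- Within-class covariance. -/
def SigmaW (H : Matrix (Fin d) (Fin K × Fin n) ℝ) : Matrix (Fin d) (Fin d) ℝ :=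
  Matrix.of fun a b =>
    (1 / ((K : ℝ) * n)) * ∑ p : Fin K × Fin n,
      (H a p - classMean H p.1 a) * (H b p - classMean H p.1 b)

/-- Between-class covariance. -/
def SigmaB (H : Matrix (Fin d) (Fin K × Fin n) ℝ) : Matrix (Fin d) (Fin d) ℝ :=
  Matrix.of fun a b =>
    (1 / (K : ℝ)) * ∑ k : Fin K,
      (classMean H k a - globalMean H a) * (classMean H k b - globalMean H b)

/-- Non-centered total covariance. -/
def SigmaTtil (H : Matrix (Fin d) (Fin K × Fin n) ℝ) : Matrix (Fin d) (Fin d) ℝ :=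
  (1 / ((K : ℝ) * n)) • (H * Hᵀ)

/-- Non-centered between-class covariance. -/
def SigmaBtil (H : Matrix (Fin d) (Fin K × Fin n) ℝ) : Matrix (Fin d) (Fin d) ℝ :=
  Matrix.of fun a b => (1 / (K : ℝ)) * ∑ k : Fin K, classMean H k a * classMean H k b

/-- The closed-form optimal last-layer weights `W*(H)`. -/
def Wstar (lW : ℝ) (H : Matrix (Fin d) (Fin K × Fin n) ℝ) :
    Matrix (Fin K) (Fin d) ℝ :=
  Ymat K n * Hᵀ * (H * Hᵀ + ((n : ℝ) * lW) • (1 : Matrix (Fin d) (Fin d) ℝ))⁻¹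

/-- The central-path loss `L(H)`. -/
def Lcp (lW lH : ℝ) (H : Matrix (Fin d) (Fin K × Fin n) ℝ) : ℝ :=
  (1 / (2 * (K : ℝ) * n)) * frobSq (Wstar lW H * H - Ymat K n) +
    (lW / (2 * (K : ℝ))) * frobSq (Wstar lW H) +
    (lH / (2 * (K : ℝ) * n)) * frobSq H

/-- `A(H) = Σ̃_T(H) + (λ_W/K) I`. -/
def Amat (lW : ℝ) (H : Matrix (Fin d) (Fin K × Fin n) ℝ) : Matrix (Fin d) (Fin d) ℝ :=
  SigmaTtil H + (lW / (K : ℝ)) • 1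

/-- The gradient of the central-path loss w.r.t. the Frobenius inner product. -/
def gradL (lW lH : ℝ) (H : Matrix (Fin d) (Fin K × Fin n) ℝ) :
    Matrix (Fin d) (Fin K × Fin n) ℝ :=
  (1 / ((K : ℝ) ^ 2 * n)) •
    ((Amat lW H)⁻¹ * (H - HbarSpread H)
      - (Amat lW H)⁻¹ * (SigmaW H + (lW / (K : ℝ)) • 1) * (Amat lW H)⁻¹ * H
      + (lH * (K : ℝ)) • H)

/-- NC1 metric. -/
def NC1til (H : Matrix (Fin d) (Fin K × Fin n) ℝ) : ℝ :=
  (SigmaW H).trace / (SigmaB H).trace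

/-!
Up to the positive factor `1 / (2Kn)` and a term independent of `W`, the objective `g` is the
ridge-regression loss `‖W H - Y‖² + μ ‖W‖²` with `μ = n λ_W`. Its normal equation is
`W (H Hᵀ + μ I) = Y Hᵀ`. At a solution `S` the first-order terms cancel, so the loss at `S + D`
exceeds the loss at `S` by exactly `‖D H‖² + μ ‖D‖²`, which is positive for `D ≠ 0`.
The class-mean formula for `S` comes from `Y Hᵀ = n H̄ᵀ` and `H Hᵀ + μ I = Kn (Σ̃_T + (λ_W / K) I)`.
-/

section FrobeniusNorm

variable {m p : Type*} [Fintype m] [Fintype p]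

theorem frobSq_eq_trace (A : Matrix m p ℝ) : frobSq A = (A * Aᵀ).trace := by
  simp only [frobSq, Matrix.trace, Matrix.diag_apply, Matrix.mul_apply, Matrix.transpose_apply,
    pow_two]

theorem frobSq_nonneg (A : Matrix m p ℝ) : 0 ≤ frobSq A :=
  Finset.sum_nonneg fun _ _ => Finset.sum_nonneg fun _ _ => sq_nonneg _

theorem frobSq_eq_zero_iff {A : Matrix m p ℝ} : frobSq A = 0 ↔ A = 0 := by
  rw [frobSq_eq_trace, ← Matrix.conjTranspose_eq_transpose_of_trivial,
    Matrix.trace_mul_conjTranspose_self_eq_zero_iff]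

theorem frobSq_pos_iff {A : Matrix m p ℝ} : 0 < frobSq A ↔ A ≠ 0 := by
  rw [(frobSq_nonneg A).lt_iff_ne', Ne, frobSq_eq_zero_iff]

theorem frobSq_add (A B : Matrix m p ℝ) :
    frobSq (A + B) = frobSq A + 2 * (A * Bᵀ).trace + frobSq B := by
  have trace_comm : (B * Aᵀ).trace = (A * Bᵀ).trace := by
    rw [← Matrix.trace_transpose, Matrix.transpose_mul, Matrix.transpose_transpose]
  simp only [frobSq_eq_trace, Matrix.transpose_add, Matrix.add_mul, Matrix.mul_add,
    Matrix.trace_add, trace_comm]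
  ring

end FrobeniusNorm

section RidgeRegression

variable {k m p : Type*} [Fintype k] [Fintype m] [Fintype p]

/-- The ridge-regression loss of the linear predictor `W`, where the columns of `X` are the samples
and those of `Y` the targets. It is unnormalized, so that `μ` weighs `‖W‖²` against the sum, not
the mean, of the squared residuals. -/
def ridgeLoss (X : Matrix m p ℝ) (Y : Matrix k p ℝ) (μ : ℝ) (W : Matrix k m ℝ) : ℝ :=
  frobSq (W * X - Y) + μ * frobSq W

variable [DecidableEq m]

theorem isUnit_det_mul_transpose_add_smul_one (X : Matrix m p ℝ) {μ : ℝ} (hμ : 0 < μ) :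
    IsUnit (X * Xᵀ + μ • (1 : Matrix m m ℝ)).det := by
  have gram_posSemidef : (X * Xᵀ).PosSemidef := by
    simpa only [Matrix.conjTranspose_eq_transpose_of_trivial] using
      Matrix.posSemidef_self_mul_conjTranspose X
  have regularizer_posDef : (μ • (1 : Matrix m m ℝ)).PosDef := Matrix.PosDef.one.smul hμ
  exact (Matrix.PosDef.posSemidef_add gram_posSemidef regularizer_posDef).det_pos.ne'.isUnit

theorem trace_residual_add_trace_eq_zero {X : Matrix m p ℝ} {Y : Matrix k p ℝ} {μ : ℝ}
    {S : Matrix k m ℝ} (hS : S * (X * Xᵀ + μ • (1 : Matrix m m ℝ)) = Y * Xᵀ) (D : Matrix k m ℝ) :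
    ((S * X - Y) * (D * X)ᵀ).trace + μ * (S * Dᵀ).trace = 0 := by
  have gradient_eq_zero : (S * X - Y) * Xᵀ + μ • S = 0 := by
    rw [Matrix.sub_mul, ← hS, Matrix.mul_add, Matrix.mul_smul, Matrix.mul_one, Matrix.mul_assoc]
    abel
  calc ((S * X - Y) * (D * X)ᵀ).trace + μ * (S * Dᵀ).trace
      = (((S * X - Y) * Xᵀ + μ • S) * Dᵀ).trace := by
        rw [Matrix.transpose_mul, ← Matrix.mul_assoc, Matrix.add_mul, Matrix.smul_mul,
          Matrix.trace_add, Matrix.trace_smul, smul_eq_mul]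
    _ = 0 := by rw [gradient_eq_zero, Matrix.zero_mul, Matrix.trace_zero]

theorem ridgeLoss_add_of_normal_equation {X : Matrix m p ℝ} {Y : Matrix k p ℝ} {μ : ℝ}
    {S : Matrix k m ℝ} (hS : S * (X * Xᵀ + μ • (1 : Matrix m m ℝ)) = Y * Xᵀ) (D : Matrix k m ℝ) :
    ridgeLoss X Y μ (S + D) = ridgeLoss X Y μ S + (frobSq (D * X) + μ * frobSq D) := by
  have residual_add : (S + D) * X - Y = (S * X - Y) + D * X := by
    rw [Matrix.add_mul, add_sub_right_comm]
  rw [ridgeLoss, ridgeLoss, residual_add, frobSq_add, frobSq_add]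
  linear_combination 2 * trace_residual_add_trace_eq_zero hS D

theorem ridgeLoss_lt_of_normal_equation {X : Matrix m p ℝ} {Y : Matrix k p ℝ} {μ : ℝ} (hμ : 0 < μ)
    {S W : Matrix k m ℝ} (hS : S * (X * Xᵀ + μ • (1 : Matrix m m ℝ)) = Y * Xᵀ) (hW : W ≠ S) :
    ridgeLoss X Y μ S < ridgeLoss X Y μ W := by
  have excess_pos : 0 < frobSq ((W - S) * X) + μ * frobSq (W - S) :=
    add_pos_of_nonneg_of_pos (frobSq_nonneg _)
      (mul_pos hμ (frobSq_pos_iff.2 (sub_ne_zero.2 hW)))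
  calc ridgeLoss X Y μ S
      < ridgeLoss X Y μ S + (frobSq ((W - S) * X) + μ * frobSq (W - S)) :=
        lt_add_of_pos_right _ excess_pos
    _ = ridgeLoss X Y μ W := by
        rw [← ridgeLoss_add_of_normal_equation hS, add_sub_cancel]

end RidgeRegression

section UnconstrainedFeatures

theorem g_eq_ridgeLoss (hn : n ≠ 0) (lW lH : ℝ) (W : Matrix (Fin K) (Fin d) ℝ)
    (H : Matrix (Fin d) (Fin K × Fin n) ℝ) :
    g lW lH W H = 1 / (2 * (K : ℝ) * n) * ridgeLoss H (Ymat K n) (n * lW) W +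
      lH / (2 * (K : ℝ) * n) * frobSq H := by
  rw [g, ridgeLoss]
  field_simp

theorem Wstar_normal_equation {lW : ℝ} {H : Matrix (Fin d) (Fin K × Fin n) ℝ}
    (hdet : IsUnit (H * Hᵀ + ((n : ℝ) * lW) • (1 : Matrix (Fin d) (Fin d) ℝ)).det) :
    Wstar lW H * (H * Hᵀ + ((n : ℝ) * lW) • (1 : Matrix (Fin d) (Fin d) ℝ)) = Ymat K n * Hᵀ :=
  Matrix.nonsing_inv_mul_cancel_right _ _ hdet

theorem g_Wstar_lt (hK : 0 < K) (hn : 0 < n) {lW : ℝ} (hlW : 0 < lW) (lH : ℝ)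
    {H : Matrix (Fin d) (Fin K × Fin n) ℝ} {W : Matrix (Fin K) (Fin d) ℝ} (hW : W ≠ Wstar lW H) :
    g lW lH (Wstar lW H) H < g lW lH W H := by
  have hμ : 0 < (n : ℝ) * lW := by positivity
  have loss_lt : ridgeLoss H (Ymat K n) (n * lW) (Wstar lW H) <
      ridgeLoss H (Ymat K n) (n * lW) W :=
    ridgeLoss_lt_of_normal_equation hμ
      (Wstar_normal_equation (isUnit_det_mul_transpose_add_smul_one H hμ)) hW
  rw [g_eq_ridgeLoss hn.ne', g_eq_ridgeLoss hn.ne']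
  gcongr

theorem Ymat_mul_transpose (hn : n ≠ 0) (H : Matrix (Fin d) (Fin K × Fin n) ℝ) :
    Ymat K n * Hᵀ = (n : ℝ) • (Hbar H)ᵀ := by
  ext k a
  have class_sum : (Ymat K n * Hᵀ) k a = ∑ i, H a (k, i) := by
    simp only [Ymat, Matrix.mul_apply, Matrix.of_apply, Matrix.transpose_apply, ite_mul, one_mul,
      zero_mul, Fintype.sum_prod_type_right, Finset.sum_ite_eq', Finset.mem_univ, if_true]
  rw [class_sum, Matrix.smul_apply, Matrix.transpose_apply, Hbar, Matrix.of_apply, classMean,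
    smul_eq_mul, one_div, mul_inv_cancel_left₀ (Nat.cast_ne_zero.2 hn)]

theorem Amat_eq_smul (hn : n ≠ 0) (lW : ℝ) (H : Matrix (Fin d) (Fin K × Fin n) ℝ) :
    Amat lW H = ((K : ℝ) * n)⁻¹ • (H * Hᵀ + ((n : ℝ) * lW) • (1 : Matrix (Fin d) (Fin d) ℝ)) := by
  have scale_eq : lW / (K : ℝ) = ((K : ℝ) * n)⁻¹ * (n * lW) := by field_simp
  rw [Amat, SigmaTtil, smul_add, smul_smul, one_div, scale_eq]

theorem Amat_inv (hK : K ≠ 0) (hn : n ≠ 0) {lW : ℝ} {H : Matrix (Fin d) (Fin K × Fin n) ℝ}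
    (hdet : IsUnit (H * Hᵀ + ((n : ℝ) * lW) • (1 : Matrix (Fin d) (Fin d) ℝ)).det) :
    (Amat lW H)⁻¹ =
      ((K : ℝ) * n) • (H * Hᵀ + ((n : ℝ) * lW) • (1 : Matrix (Fin d) (Fin d) ℝ))⁻¹ := by
  have hKn : (K : ℝ) * n ≠ 0 := mul_ne_zero (Nat.cast_ne_zero.2 hK) (Nat.cast_ne_zero.2 hn)
  let scale : ℝˣ := (Units.mk0 _ hKn)⁻¹
  rw [Amat_eq_smul hn]
  exact (Matrix.inv_smul' _ scale hdet).trans (by simp [scale, Units.smul_def])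

theorem Wstar_eq_smul_Hbar_mul_Amat_inv (hK : K ≠ 0) (hn : n ≠ 0) {lW : ℝ}
    {H : Matrix (Fin d) (Fin K × Fin n) ℝ}
    (hdet : IsUnit (H * Hᵀ + ((n : ℝ) * lW) • (1 : Matrix (Fin d) (Fin d) ℝ)).det) :
    Wstar lW H = (1 / (K : ℝ)) • ((Hbar H)ᵀ * (Amat lW H)⁻¹) := by
  have scale_eq : 1 / (K : ℝ) * (K * n) = n := by field_simp
  rw [Wstar, Ymat_mul_transpose hn, Amat_inv hK hn hdet, Matrix.mul_smul, smul_smul, scale_eq,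
    Matrix.smul_mul]

end UnconstrainedFeatures

theorem Wstar_unique_minimizer_general
    (K n d : ℕ) (hK : 0 < K) (hn : 0 < n)
    (lW lH : ℝ) (hlW : 0 < lW)
    (H : Matrix (Fin d) (Fin K × Fin n) ℝ) :
    IsUnit (H * Hᵀ + ((n : ℝ) * lW) • (1 : Matrix (Fin d) (Fin d) ℝ)).det ∧
    (∀ W : Matrix (Fin K) (Fin d) ℝ, W ≠ Wstar lW H →
      g lW lH (Wstar lW H) H < g lW lH W H) ∧
    Wstar lW H = (1 / (K : ℝ)) •
      ((Hbar H)ᵀ * (SigmaTtil H + (lW / (K : ℝ)) • (1 : Matrix (Fin d) (Fin d) ℝ))⁻¹) := by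
  have hdet := isUnit_det_mul_transpose_add_smul_one H (μ := n * lW) (by positivity)
  exact ⟨hdet, fun _ hW => g_Wstar_lt hK hn hlW lH hW,
    Wstar_eq_smul_Hbar_mul_Amat_inv hK.ne' hn.ne' hdet⟩

/-- for every `H` and `λ_W > 0`, the matrix `H Hᵀ + n λ_W I_d` is invertible;
`W ↦ g(W,H)` has the unique global minimizer `W*(H) = Y Hᵀ (H Hᵀ + n λ_W I_d)⁻¹`; and
`W*(H) = (1/K) H̄ᵀ (Σ̃_T(H) + (λ_W/K) I_d)⁻¹`. -/
theorem Wstar_unique_minimizer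
    (K n d : ℕ) (hK : 0 < K) (hn : 0 < n) (hdK : K ≤ d)
    (lW lH : ℝ) (hlW : 0 < lW) (hlH : 0 < lH)
    (H : Matrix (Fin d) (Fin K × Fin n) ℝ) :
    IsUnit (H * Hᵀ + ((n : ℝ) * lW) • (1 : Matrix (Fin d) (Fin d) ℝ)).det ∧
    (∀ W : Matrix (Fin K) (Fin d) ℝ, W ≠ Wstar lW H →
      g lW lH (Wstar lW H) H < g lW lH W H) ∧
    Wstar lW H = (1 / (K : ℝ)) •
      ((Hbar H)ᵀ * (SigmaTtil H + (lW / (K : ℝ)) • (1 : Matrix (Fin d) (Fin d) ℝ))⁻¹) :=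
  Wstar_unique_minimizer_general K n d hK hn lW lH hlW H

end
end

section
/- Let λ_W > 0, λ_H ≥ 0 and let t ↦ H_t be a gradient-flow trajectory on the central path. At every time t ≥ 0 at which tr(Σ_W(H_t)) > 0 and tr(Σ_B(H_t)) > 0, the function s ↦ ÑC₁(H_s) := tr(Σ_W(H_s))/tr(Σ_B(H_s)) is differentiable at t with strictly negative derivative; hence ÑC₁(H_t) strictly decreases along the flow as long as it has not reached zero. -/
open Matrix Filter
open scoped BigOperators

noncomputable section

variable {K n d : ℕ}

/-! Under the flow, the part of `H` deviating from the class means and the matrix of centered class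
means both evolve linearly: up to the common decay `-λ_H`, the former is driven by the negative
semidefinite matrix `-K⁻¹ A⁻¹ Σ̃_B A⁻¹` and the latter by the positive definite matrix
`K⁻¹ A⁻¹ (Σ_W + (λ_W/K) I) A⁻¹`. Hence `(tr Σ_W)' ≤ -2 λ_H tr Σ_W` while
`(tr Σ_B)' > -2 λ_H tr Σ_B`, and the quotient decreases. -/

section Calculus

lemma exists_neg_hasDerivAt_div {f g : ℝ → ℝ} {f' g' r t : ℝ} (hf : HasDerivAt f f' t)
    (hg : HasDerivAt g g' t) (hf_pos : 0 < f t) (hg_pos : 0 < g t) (hf_le : f' ≤ r * f t)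
    (hg_lt : r * g t < g') :
    ∃ D < 0, HasDerivAt (fun s => f s / g s) D t := by
  refine ⟨_, div_neg_of_neg_of_pos (sub_neg.2 ?_) (by positivity), hf.fun_div hg hg_pos.ne'⟩
  calc f' * g t ≤ r * f t * g t := by gcongr
    _ = f t * (r * g t) := by ring
    _ < f t * g' := by gcongr

lemma strictAntiOn_of_exists_neg_hasDerivAt {S : Set ℝ} (hS : Convex ℝ S) {f : ℝ → ℝ}
    (hf : ∀ t ∈ S, ∃ D < 0, HasDerivAt f D t) : StrictAntiOn f S := by
  refine strictAntiOn_of_deriv_neg hS (fun t ht => ?_) fun t ht => ?_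
  · obtain ⟨D, -, hD⟩ := hf t ht
    exact hD.continuousAt.continuousWithinAt
  · obtain ⟨D, hD_neg, hD⟩ := hf t (interior_subset ht)
    rwa [hD.deriv]

variable {ι κ μ : Type*} [Fintype ι] [Fintype κ] [Fintype μ]
  {𝕜 : Type*} [NontriviallyNormedField 𝕜] {t : 𝕜}

lemma hasDerivAt_trace_mul_transpose_self {X : 𝕜 → Matrix ι κ 𝕜} {X' : Matrix ι κ 𝕜}
    (hX : ∀ i j, HasDerivAt (fun s => X s i j) (X' i j) t) :
    HasDerivAt (fun s => (X s * (X s)ᵀ).trace) (2 * ((X t)ᵀ * X').trace) t := by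
  have h_sum : HasDerivAt (fun s => ∑ i, ∑ j, X s i j * X s i j)
      (∑ i, ∑ j, (X' i j * X t i j + X t i j * X' i j)) t :=
    .fun_sum fun i _ => .fun_sum fun j _ => (hX i j).fun_mul (hX i j)
  convert h_sum using 1
  · simp only [trace, diag, mul_apply, transpose_apply]
  · rw [trace_mul_comm]
    simp only [trace, diag, mul_apply, transpose_apply, Finset.mul_sum]
    exact Finset.sum_congr rfl fun i _ => Finset.sum_congr rfl fun j _ => by ring

lemma hasDerivAt_trace_mul_transpose_self_of_linear {X : 𝕜 → Matrix ι κ 𝕜} {X' : Matrix ι κ 𝕜}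
    (hX : ∀ i j, HasDerivAt (fun s => X s i j) (X' i j) t) (C : Matrix κ μ 𝕜)
    {B : Matrix ι ι 𝕜} {r : 𝕜} (hX' : X' * C = B * (X t * C) - r • (X t * C)) :
    HasDerivAt (fun s => (X s * C * (X s * C)ᵀ).trace)
      (2 * ((X t * C)ᵀ * B * (X t * C)).trace - 2 * r * (X t * C * (X t * C)ᵀ).trace) t := by
  have hXC : ∀ i j, HasDerivAt (fun s => (X s * C) i j) ((X' * C) i j) t := fun i j => by
    simp only [mul_apply]
    exact .fun_sum fun k _ => (hX i k).mul_const _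
  convert hasDerivAt_trace_mul_transpose_self hXC using 1
  rw [hX', Matrix.mul_sub, Matrix.mul_smul, trace_sub, trace_smul, trace_mul_comm (X t * C),
    smul_eq_mul, Matrix.mul_assoc]
  ring

end Calculus

lemma trace_conjTranspose_mul_mul_pos {ι κ R : Type*} [Fintype ι] [Fintype κ] [Ring R]
    [PartialOrder R] [StarRing R] [IsOrderedCancelAddMonoid R] {P : Matrix ι ι R} (hP : P.PosDef)
    {X : Matrix ι κ R} (hX : X ≠ 0) : 0 < (Xᴴ * P * X).trace := by
  obtain ⟨j, hj⟩ : ∃ j, X.col j ≠ 0 := by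
    by_contra! h_zero
    exact hX (ext_col h_zero)
  have h_diag (j : κ) : (Xᴴ * P * X).diag j = star (X.col j) ⬝ᵥ P *ᵥ X.col j := by
    rw [Matrix.mul_assoc]
    rfl
  refine Finset.sum_pos' (fun k _ => ?_) ⟨j, Finset.mem_univ j, ?_⟩
  · exact (h_diag k).symm ▸ hP.posSemidef.dotProduct_mulVec_nonneg (X.col k)
  · exact (h_diag j).symm ▸ hP.dotProduct_mulVec_pos hj

section ClassAveraging

/-- The class-averaging matrix `E = n⁻¹ Yᵀ`; right multiplication by it sends `H` to the matrix `H̄`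
of class means. -/
def classAvg (K n : ℕ) : Matrix (Fin K × Fin n) (Fin K) ℝ :=
  (1 / (n : ℝ)) • (Ymat K n)ᵀ

/-- The within-class centering matrix `I - E Y`; right multiplication by it subtracts from each
column of `H` the mean of its class. -/
def withinCentering (K n : ℕ) : Matrix (Fin K × Fin n) (Fin K × Fin n) ℝ :=
  1 - classAvg K n * Ymat K n

/-- The between-class centering matrix `E (I - K⁻¹ 1 1ᵀ)`; right multiplication by it sends `H` to
the matrix with columns `h̄_k - h̄_G`. -/
def betweenCentering (K n : ℕ) : Matrix (Fin K × Fin n) (Fin K) ℝ :=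
  classAvg K n * (1 - Matrix.of fun _ _ => 1 / (K : ℝ) : Matrix (Fin K) (Fin K) ℝ)

lemma Hbar_eq_mul_classAvg (H : Matrix (Fin d) (Fin K × Fin n) ℝ) :
    Hbar H = H * classAvg K n := by
  ext a k
  simp [Hbar, classMean, classAvg, Ymat, mul_apply, Fintype.sum_prod_type_right,
    Finset.mul_sum, mul_comm]

lemma sub_HbarSpread_eq_mul_withinCentering (H : Matrix (Fin d) (Fin K × Fin n) ℝ) :
    H - HbarSpread H = H * withinCentering K n := by
  have h_spread : HbarSpread H = Hbar H * Ymat K n := by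
    ext a p
    simp [HbarSpread, Hbar, Ymat, mul_apply]
  rw [h_spread, Hbar_eq_mul_classAvg, withinCentering, Matrix.mul_sub, Matrix.mul_one,
    Matrix.mul_assoc]

lemma classMean_sub_globalMean (H : Matrix (Fin d) (Fin K × Fin n) ℝ) (k : Fin K) (a : Fin d) :
    classMean H k a - globalMean H a = (H * betweenCentering K n) a k := by
  rw [betweenCentering, ← Matrix.mul_assoc, ← Hbar_eq_mul_classAvg, Matrix.mul_sub, Matrix.mul_one]
  simp [Hbar, classMean, globalMean, mul_apply, Fintype.sum_prod_type, Finset.mul_sum,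
    mul_comm, mul_assoc]

lemma SigmaW_eq_smul_mul_transpose (H : Matrix (Fin d) (Fin K × Fin n) ℝ) :
    SigmaW H =
      (1 / ((K : ℝ) * n)) • (H * withinCentering K n * (H * withinCentering K n)ᵀ) := by
  rw [← sub_HbarSpread_eq_mul_withinCentering]
  rfl

lemma SigmaB_eq_smul_mul_transpose (H : Matrix (Fin d) (Fin K × Fin n) ℝ) :
    SigmaB H = (1 / (K : ℝ)) • (H * betweenCentering K n * (H * betweenCentering K n)ᵀ) := by
  ext a b
  simp only [SigmaB, of_apply, classMean_sub_globalMean]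
  rfl

lemma SigmaBtil_eq_smul_mul_transpose (H : Matrix (Fin d) (Fin K × Fin n) ℝ) :
    SigmaBtil H = (1 / (K : ℝ)) • (Hbar H * (Hbar H)ᵀ) :=
  rfl

lemma Ymat_mul_transpose_self : Ymat K n * (Ymat K n)ᵀ = (n : ℝ) • 1 := by
  ext k l
  rcases eq_or_ne k l with rfl | h
  · simp [Ymat, mul_apply, Fintype.sum_prod_type]
  · simp [Ymat, mul_apply, Fintype.sum_prod_type, h, h.symm]

lemma classAvg_mul_Ymat_mul_classAvg :
    classAvg K n * Ymat K n * classAvg K n = classAvg K n := by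
  ext p k
  have hn : (n : ℝ) ≠ 0 := by exact_mod_cast p.2.pos.ne'
  rw [classAvg, Matrix.mul_assoc, Matrix.mul_smul, Ymat_mul_transpose_self, smul_smul,
    one_div_mul_cancel hn, one_smul, Matrix.mul_one]

lemma classAvg_mul_transpose_self :
    classAvg K n * (classAvg K n)ᵀ = (1 / (n : ℝ)) • (classAvg K n * Ymat K n) := by
  simp [classAvg]

lemma withinCentering_mul_classAvg : withinCentering K n * classAvg K n = 0 := by
  rw [withinCentering, Matrix.sub_mul, Matrix.one_mul, classAvg_mul_Ymat_mul_classAvg, sub_self]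

lemma withinCentering_mul_betweenCentering :
    withinCentering K n * betweenCentering K n = 0 := by
  rw [betweenCentering, ← Matrix.mul_assoc, withinCentering_mul_classAvg, Matrix.zero_mul]

lemma withinCentering_mul_self :
    withinCentering K n * withinCentering K n = withinCentering K n := by
  nth_rw 2 [withinCentering]
  rw [Matrix.mul_sub, Matrix.mul_one, ← Matrix.mul_assoc, withinCentering_mul_classAvg,
    Matrix.zero_mul, sub_zero]

lemma transpose_withinCentering : (withinCentering K n)ᵀ = withinCentering K n := by
  simp [withinCentering, classAvg]

lemma SigmaTtil_eq_SigmaBtil_add_SigmaW (H : Matrix (Fin d) (Fin K × Fin n) ℝ) :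
    SigmaTtil H = SigmaBtil H + SigmaW H := by
  have h_within : H * withinCentering K n * (H * withinCentering K n)ᵀ =
      H * withinCentering K n * Hᵀ := by
    rw [transpose_mul, transpose_withinCentering, ← Matrix.mul_assoc, Matrix.mul_assoc H,
      withinCentering_mul_self]
  have h_between : Hbar H * (Hbar H)ᵀ = (1 / (n : ℝ)) • (H * (classAvg K n * Ymat K n) * Hᵀ) := by
    rw [Hbar_eq_mul_classAvg, transpose_mul, ← Matrix.mul_assoc, Matrix.mul_assoc H,
      classAvg_mul_transpose_self, Matrix.mul_smul, Matrix.smul_mul]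
  rw [SigmaTtil, SigmaBtil_eq_smul_mul_transpose, SigmaW_eq_smul_mul_transpose, h_within, h_between,
    smul_smul, one_div_mul_one_div, ← smul_add, ← Matrix.add_mul, ← Matrix.mul_add, withinCentering,
    add_sub_cancel, Matrix.mul_one]

lemma Amat_eq_SigmaBtil_add (lW : ℝ) (H : Matrix (Fin d) (Fin K × Fin n) ℝ) :
    Amat lW H = SigmaBtil H + (SigmaW H + (lW / (K : ℝ)) • 1) := by
  rw [Amat, SigmaTtil_eq_SigmaBtil_add_SigmaW, add_assoc]

end ClassAveraging

section Positivity

variable {lW : ℝ}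

lemma posSemidef_SigmaW (H : Matrix (Fin d) (Fin K × Fin n) ℝ) : (SigmaW H).PosSemidef := by
  rw [SigmaW_eq_smul_mul_transpose, ← conjTranspose_eq_transpose_of_trivial]
  exact (posSemidef_self_mul_conjTranspose _).smul (by positivity)

lemma posSemidef_SigmaBtil (H : Matrix (Fin d) (Fin K × Fin n) ℝ) : (SigmaBtil H).PosSemidef := by
  rw [SigmaBtil_eq_smul_mul_transpose, ← conjTranspose_eq_transpose_of_trivial]
  exact (posSemidef_self_mul_conjTranspose _).smul (by positivity)

lemma posDef_SigmaW_add_smul_one (hK : 0 < K) (hlW : 0 < lW)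
    (H : Matrix (Fin d) (Fin K × Fin n) ℝ) : (SigmaW H + (lW / (K : ℝ)) • 1).PosDef :=
  PosDef.posSemidef_add (posSemidef_SigmaW H) (PosDef.one.smul (by positivity))

lemma posDef_Amat (hK : 0 < K) (hlW : 0 < lW) (H : Matrix (Fin d) (Fin K × Fin n) ℝ) :
    (Amat lW H).PosDef := by
  rw [Amat_eq_SigmaBtil_add]
  exact PosDef.posSemidef_add (posSemidef_SigmaBtil H) (posDef_SigmaW_add_smul_one hK hlW H)

/-- The matrix `A⁻¹ Σ̃_B A⁻¹` driving the decay of the within-class deviations. -/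
def withinRate (lW : ℝ) (H : Matrix (Fin d) (Fin K × Fin n) ℝ) : Matrix (Fin d) (Fin d) ℝ :=
  (Amat lW H)⁻¹ * SigmaBtil H * (Amat lW H)⁻¹

/-- The matrix `A⁻¹ (Σ_W + (λ_W/K) I) A⁻¹` driving the growth of the class means. -/
def betweenRate (lW : ℝ) (H : Matrix (Fin d) (Fin K × Fin n) ℝ) : Matrix (Fin d) (Fin d) ℝ :=
  (Amat lW H)⁻¹ * (SigmaW H + (lW / (K : ℝ)) • 1) * (Amat lW H)⁻¹

lemma posSemidef_withinRate (hK : 0 < K) (hlW : 0 < lW) (H : Matrix (Fin d) (Fin K × Fin n) ℝ) :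
    (withinRate lW H).PosSemidef := by
  have h_conj := (posSemidef_SigmaBtil H).conjTranspose_mul_mul_same (Amat lW H)⁻¹
  rwa [(posDef_Amat hK hlW H).inv.isHermitian.eq] at h_conj

lemma posDef_betweenRate (hK : 0 < K) (hlW : 0 < lW) (H : Matrix (Fin d) (Fin K × Fin n) ℝ) :
    (betweenRate lW H).PosDef := by
  have hA := (posDef_Amat hK hlW H).inv
  have h_conj := (posDef_SigmaW_add_smul_one hK hlW H).conjTranspose_mul_mul_same
    (mulVec_injective_of_isUnit hA.isUnit)
  rwa [hA.isHermitian.eq] at h_conj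

lemma inv_Amat_sub_betweenRate (hK : 0 < K) (hlW : 0 < lW)
    (H : Matrix (Fin d) (Fin K × Fin n) ℝ) :
    (Amat lW H)⁻¹ - betweenRate lW H = withinRate lW H := by
  have hA : (Amat lW H)⁻¹ * Amat lW H = 1 :=
    nonsing_inv_mul _ ((isUnit_iff_isUnit_det _).1 (posDef_Amat hK hlW H).isUnit)
  rw [sub_eq_iff_eq_add, withinRate, betweenRate, ← Matrix.add_mul, ← Matrix.mul_add,
    ← Amat_eq_SigmaBtil_add, hA, Matrix.one_mul]

end Positivity

section Flow

variable {lW lH : ℝ}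

lemma neg_smul_gradL (H : Matrix (Fin d) (Fin K × Fin n) ℝ) :
    (-((K : ℝ) * n)) • gradL lW lH H =
      (1 / (K : ℝ)) • (betweenRate lW H * H - (Amat lW H)⁻¹ * (H * withinCentering K n)) -
        lH • H := by
  rw [gradL, sub_HbarSpread_eq_mul_withinCentering, ← betweenRate, smul_smul]
  ext a p
  have hK : (K : ℝ) ≠ 0 := by exact_mod_cast p.1.pos.ne'
  have hn : (n : ℝ) ≠ 0 := by exact_mod_cast p.2.pos.ne'
  simp only [Matrix.smul_apply, Matrix.add_apply, Matrix.sub_apply, smul_eq_mul]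
  field_simp
  ring

lemma neg_smul_gradL_mul_withinCentering (hK : 0 < K) (hlW : 0 < lW)
    (H : Matrix (Fin d) (Fin K × Fin n) ℝ) :
    (-((K : ℝ) * n)) • gradL lW lH H * withinCentering K n =
      (-(1 / (K : ℝ))) • withinRate lW H * (H * withinCentering K n) -
        lH • (H * withinCentering K n) := by
  rw [neg_smul_gradL, ← inv_Amat_sub_betweenRate hK hlW]
  simp only [Matrix.sub_mul, Matrix.smul_mul, Matrix.mul_assoc, withinCentering_mul_self, neg_smul,
    ← smul_neg, neg_sub]

lemma neg_smul_gradL_mul_betweenCentering (H : Matrix (Fin d) (Fin K × Fin n) ℝ) :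
    (-((K : ℝ) * n)) • gradL lW lH H * betweenCentering K n =
      (1 / (K : ℝ)) • betweenRate lW H * (H * betweenCentering K n) -
        lH • (H * betweenCentering K n) := by
  rw [neg_smul_gradL]
  simp only [Matrix.sub_mul, Matrix.smul_mul, Matrix.mul_assoc,
    withinCentering_mul_betweenCentering, Matrix.mul_zero, sub_zero]

variable {Ht : ℝ → Matrix (Fin d) (Fin K × Fin n) ℝ} {t : ℝ}

lemma hasDerivAt_trace_SigmaW (hK : 0 < K) (hlW : 0 < lW)
    (hflow : ∀ (a : Fin d) (p : Fin K × Fin n),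
      HasDerivAt (fun s => Ht s a p) (-((K : ℝ) * n) * gradL lW lH (Ht t) a p) t) :
    HasDerivAt (fun s => (SigmaW (Ht s)).trace)
      (-(2 / ((K : ℝ) ^ 2 * n)) * ((Ht t * withinCentering K n)ᵀ * withinRate lW (Ht t) *
        (Ht t * withinCentering K n)).trace - 2 * lH * (SigmaW (Ht t)).trace) t := by
  simp only [SigmaW_eq_smul_mul_transpose, trace_smul, smul_eq_mul]
  refine ((hasDerivAt_trace_mul_transpose_self_of_linear hflow (withinCentering K n)
    (neg_smul_gradL_mul_withinCentering hK hlW (Ht t))).const_mul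
      (1 / ((K : ℝ) * n))).congr_deriv ?_
  simp only [Matrix.mul_smul, Matrix.smul_mul, trace_smul, smul_eq_mul]
  ring

lemma hasDerivAt_trace_SigmaB
    (hflow : ∀ (a : Fin d) (p : Fin K × Fin n),
      HasDerivAt (fun s => Ht s a p) (-((K : ℝ) * n) * gradL lW lH (Ht t) a p) t) :
    HasDerivAt (fun s => (SigmaB (Ht s)).trace)
      (2 / (K : ℝ) ^ 2 * ((Ht t * betweenCentering K n)ᵀ * betweenRate lW (Ht t) *
        (Ht t * betweenCentering K n)).trace - 2 * lH * (SigmaB (Ht t)).trace) t := by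
  simp only [SigmaB_eq_smul_mul_transpose, trace_smul, smul_eq_mul]
  refine ((hasDerivAt_trace_mul_transpose_self_of_linear hflow (betweenCentering K n)
    (neg_smul_gradL_mul_betweenCentering (Ht t))).const_mul (1 / (K : ℝ))).congr_deriv ?_
  simp only [Matrix.mul_smul, Matrix.smul_mul, trace_smul, smul_eq_mul]
  ring

lemma exists_neg_hasDerivAt_NC1til (hlW : 0 < lW)
    (hflow : ∀ (a : Fin d) (p : Fin K × Fin n),
      HasDerivAt (fun s => Ht s a p) (-((K : ℝ) * n) * gradL lW lH (Ht t) a p) t)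
    (hW : 0 < (SigmaW (Ht t)).trace) (hB : 0 < (SigmaB (Ht t)).trace) :
    ∃ D < 0, HasDerivAt (fun s => NC1til (Ht s)) D t := by
  have hK : 0 < K := Nat.pos_of_ne_zero (by rintro rfl; simp [SigmaB_eq_smul_mul_transpose] at hB)
  have h_ne : Ht t * betweenCentering K n ≠ 0 := fun h_zero => by
    simp [SigmaB_eq_smul_mul_transpose, h_zero] at hB
  have h_within := ((posSemidef_withinRate hK hlW (Ht t)).conjTranspose_mul_mul_same
    (Ht t * withinCentering K n)).trace_nonneg
  have h_between := trace_conjTranspose_mul_mul_pos (posDef_betweenRate hK hlW (Ht t)) h_ne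
  rw [conjTranspose_eq_transpose_of_trivial] at h_within h_between
  refine exists_neg_hasDerivAt_div (r := -(2 * lH)) (hasDerivAt_trace_SigmaW hK hlW hflow)
    (hasDerivAt_trace_SigmaB hflow) hW hB ?_ ?_
  · have := mul_nonneg (a := 2 / ((K : ℝ) ^ 2 * n)) (by positivity) h_within
    linarith
  · have := mul_pos (a := 2 / (K : ℝ) ^ 2) (by positivity) h_between
    linarith

end Flow

theorem nc1_strictly_decreases_along_flow_general {lW lH : ℝ} (hlW : 0 < lW) {T : Set ℝ}
    {Ht : ℝ → Matrix (Fin d) (Fin K × Fin n) ℝ}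
    (hflow : ∀ t ∈ T, ∀ (a : Fin d) (p : Fin K × Fin n),
      HasDerivAt (fun s => Ht s a p) (-((K : ℝ) * n) * gradL lW lH (Ht t) a p) t) :
    (∀ t ∈ T, 0 < (SigmaW (Ht t)).trace → 0 < (SigmaB (Ht t)).trace →
      ∃ D < 0, HasDerivAt (fun s => NC1til (Ht s)) D t) ∧
    (∀ s t : ℝ, Set.Icc s t ⊆ T → s < t →
      (∀ u ∈ Set.Icc s t,
        0 < (SigmaW (Ht u)).trace ∧ 0 < (SigmaB (Ht u)).trace) →
      NC1til (Ht t) < NC1til (Ht s)) := by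
  have h_deriv : ∀ t ∈ T, 0 < (SigmaW (Ht t)).trace → 0 < (SigmaB (Ht t)).trace →
      ∃ D < 0, HasDerivAt (fun s => NC1til (Ht s)) D t := fun t ht =>
    exists_neg_hasDerivAt_NC1til hlW (hflow t ht)
  refine ⟨h_deriv, fun s t hT hst hpos => ?_⟩
  have h_anti : StrictAntiOn (fun u => NC1til (Ht u)) (Set.Icc s t) :=
    strictAntiOn_of_exists_neg_hasDerivAt (convex_Icc s t) fun u hu =>
      h_deriv u (hT hu) (hpos u hu).1 (hpos u hu).2
  exact h_anti (Set.left_mem_Icc.2 hst.le) (Set.right_mem_Icc.2 hst.le) hst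

/-- along gradient flow on the central path, at any time where
`tr Σ_W(H_t) > 0` and `tr Σ_B(H_t) > 0`, the NC1 metric `ÑC₁(H_t) = tr Σ_W / tr Σ_B` is
differentiable with strictly negative derivative; hence it strictly decreases along the flow
as long as it has not reached zero. -/
theorem nc1_strictly_decreases_along_flow
    (K n d : ℕ) (hK : 0 < K) (hn : 0 < n) (hdK : K ≤ d)
    (lW lH : ℝ) (hlW : 0 < lW) (hlH : 0 ≤ lH)
    (Ht : ℝ → Matrix (Fin d) (Fin K × Fin n) ℝ)
    (hflow : ∀ t : ℝ, 0 ≤ t → ∀ (a : Fin d) (p : Fin K × Fin n),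
      HasDerivAt (fun s => Ht s a p) (-((K : ℝ) * n) * gradL lW lH (Ht t) a p) t) :
    (∀ t : ℝ, 0 ≤ t → 0 < (SigmaW (Ht t)).trace → 0 < (SigmaB (Ht t)).trace →
      ∃ D : ℝ, D < 0 ∧ HasDerivAt (fun s => NC1til (Ht s)) D t) ∧
    (∀ s t : ℝ, 0 ≤ s → s < t →
      (∀ u ∈ Set.Icc s t,
        0 < (SigmaW (Ht u)).trace ∧ 0 < (SigmaB (Ht u)).trace) →
      NC1til (Ht t) < NC1til (Ht s)) := by
  obtain ⟨h_deriv, h_lt⟩ := nc1_strictly_decreases_along_flow_general (T := Set.Ici 0) hlW hflow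
  exact ⟨h_deriv, fun s t hs => h_lt s t (Set.Icc_subset_Ici_self.trans (Set.Ici_subset_Ici.2 hs))⟩

end
end
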